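/- Let p ≥ 1 and let f, g be two positive continuous functions on [0, ∞) such that for x > 0 the integrals I^{α,β,η,μ}_{x,k}[f^p], I^{α,β,η,μ}_{x,k}[g^p] and I^{α,β,η,μ}_{x,k}[(f+g)^p] are finite. If 0 < m ≤ f(τ)/g(τ) ≤ M for all τ ∈ (0, x), then ((M+1)(m+1)/M) · (I^{α,β,η,μ}_{x,k}[f^p])^{1/p} · (I^{α,β,η,μ}_{x,k}[g^p])^{1/p} ≤ ((I^{α,β,η,μ}_{x,k}[(f+g)^p])^{1/p})². -/

import Mathlib

open MeasureTheory Real Set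

/-- The Gauss hypergeometric series `₂F₁(a, b; c; z)`. -/
noncomputable def gauss2F1 (a b c z : ℝ) : ℝ :=
  ∑' n : ℕ, ((ascPochhammer ℝ n).eval a * (ascPochhammer ℝ n).eval b /
    ((ascPochhammer ℝ n).eval c * (n.factorial : ℝ))) * z ^ n

/-- The kernel `F(x, τ)` of the generalized k-fractional integral operator. -/
noncomputable def Fker (α β η μ k x τ : ℝ) : ℝ :=
  ((k + 1) ^ (μ + β + 1) * x ^ ((k + 1) * (-α - β - 2 * μ)) / Real.Gamma α) *
    τ ^ ((k + 1) * μ) * (x ^ (k + 1) - τ ^ (k + 1)) ^ (α - 1) *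
    gauss2F1 (α + β + μ) (-η) α (1 - (τ / x) ^ (k + 1))

/-- The generalized k-fractional integral operator `I^{α,β,η,μ}_{x,k}[f]`. -/
noncomputable def genKInt (α β η μ k x : ℝ) (f : ℝ → ℝ) : ℝ :=
  ∫ τ in (0:ℝ)..x, Fker α β η μ k x τ * τ ^ k * f τ

/-!
Since `α + β + μ`, `-η` and `α` are positive, all coefficients of the hypergeometric series are
nonnegative, so the kernel is nonnegative on `(0, x)`. Hence `f ↦ I[f ^ p] ^ (1 / p)` is monotone and
positively homogeneous on nonnegative functions (`genKInt_rpow_le`). The pointwise bounds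
`f ≤ M / (M + 1) * (f + g)` and `g ≤ 1 / (m + 1) * (f + g)`, which restate `f / g ≤ M` and
`m ≤ f / g`, then carry over to these seminorms, and multiplying the two results gives the claim.
-/

/-- The sum is nonnegative termwise, so convergence of the series is not needed: a divergent `tsum`
is `0`. -/
lemma gauss2F1_nonneg {a b c z : ℝ} (ha : 0 < a) (hb : 0 < b) (hc : 0 < c) (hz : 0 ≤ z) :
    0 ≤ gauss2F1 a b c z := by
  refine tsum_nonneg fun n => ?_
  have h1 := ascPochhammer_pos n a ha
  have h2 := ascPochhammer_pos n b hb
  have h3 := ascPochhammer_pos n c hc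
  positivity

lemma Fker_nonneg {α β η μ k x τ : ℝ} (hk : 0 ≤ k) (hα : max 0 (-β - μ) < α) (hη : η < 0)
    (hτ : τ ∈ Ioo (0:ℝ) x) : 0 ≤ Fker α β η μ k x τ := by
  obtain ⟨h0, hx⟩ := hτ
  have hxp : 0 < x := h0.trans hx
  have hα0 : 0 < α := (le_max_left _ _).trans_lt hα
  have hα1 : -β - μ < α := (le_max_right _ _).trans_lt hα
  have hΓ := Real.Gamma_pos_of_pos hα0
  have hpow : 0 ≤ x ^ (k + 1) - τ ^ (k + 1) :=
    sub_nonneg.2 (Real.rpow_le_rpow h0.le hx.le (by linarith))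
  have hz : 0 ≤ 1 - (τ / x) ^ (k + 1) :=
    sub_nonneg.2 (Real.rpow_le_one (by positivity) ((div_le_one hxp).2 hx.le) (by linarith))
  have hF := gauss2F1_nonneg (a := α + β + μ) (b := -η) (c := α) (by linarith) (by linarith) hα0 hz
  have hpow' := Real.rpow_nonneg hpow (α - 1)
  unfold Fker
  positivity

lemma genKInt_rpow_le {α β η μ k x p c : ℝ} {u v : ℝ → ℝ} (hk : 0 ≤ k)
    (hα : max 0 (-β - μ) < α) (hη : η < 0) (hx : 0 < x) (hp : 1 ≤ p) (hc : 0 ≤ c)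
    (hu : ∀ τ ∈ Ioo (0:ℝ) x, 0 ≤ u τ) (hv : ∀ τ ∈ Ioo (0:ℝ) x, 0 ≤ v τ)
    (huv : ∀ τ ∈ Ioo (0:ℝ) x, u τ ≤ c * v τ)
    (hui : IntervalIntegrable (fun τ => Fker α β η μ k x τ * τ ^ k * (u τ ^ p)) volume 0 x)
    (hvi : IntervalIntegrable (fun τ => Fker α β η μ k x τ * τ ^ k * (v τ ^ p)) volume 0 x) :
    0 ≤ genKInt α β η μ k x (fun τ => u τ ^ p) ^ (1 / p) ∧
    genKInt α β η μ k x (fun τ => u τ ^ p) ^ (1 / p) ≤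
      c * genKInt α β η μ k x (fun τ => v τ ^ p) ^ (1 / p) := by
  have hp0 : 0 < p := by linarith
  have hker : ∀ τ ∈ Ioo (0:ℝ) x, 0 ≤ Fker α β η μ k x τ * τ ^ k := fun τ hτ =>
    mul_nonneg (Fker_nonneg hk hα hη hτ) (Real.rpow_nonneg hτ.1.le _)
  have nn : ∀ w : ℝ → ℝ, (∀ τ ∈ Ioo (0:ℝ) x, 0 ≤ w τ) →
      0 ≤ genKInt α β η μ k x (fun τ => w τ ^ p) := by
    intro w hw
    unfold genKInt
    rw [intervalIntegral.integral_of_le hx.le, integral_Ioc_eq_integral_Ioo]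
    exact setIntegral_nonneg measurableSet_Ioo fun τ hτ =>
      mul_nonneg (hker τ hτ) (Real.rpow_nonneg (hw τ hτ) _)
  have key : genKInt α β η μ k x (fun τ => u τ ^ p) ≤
      c ^ p * genKInt α β η μ k x (fun τ => v τ ^ p) := by
    unfold genKInt
    rw [← intervalIntegral.integral_const_mul]
    refine intervalIntegral.integral_mono_on_of_le_Ioo hx.le hui (hvi.const_mul _) fun τ hτ => ?_
    have h := Real.rpow_le_rpow (hu τ hτ) (huv τ hτ) hp0.le
    rw [Real.mul_rpow hc (hv τ hτ)] at h
    exact (mul_le_mul_of_nonneg_left h (hker τ hτ)).trans_eq (by ring)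
  refine ⟨Real.rpow_nonneg (nn u hu) _, ?_⟩
  have h := Real.rpow_le_rpow (nn u hu) key (z := 1 / p) (by positivity)
  rwa [Real.mul_rpow (Real.rpow_nonneg hc _) (nn v hv), ← Real.rpow_mul hc,
    mul_one_div_cancel hp0.ne', Real.rpow_one] at h

theorem product_bound (α β η μ k x : ℝ)
    (hk : 0 ≤ k) (hα : max 0 (-β - μ) < α) (hβ : β < 1) (hμ : -1 < μ)
    (hη1 : β - 1 < η) (hη2 : η < 0) (hx : 0 < x) (p m M : ℝ) (f g : ℝ → ℝ)
    (hfc : ContinuousOn f (Ici 0)) (hgc : ContinuousOn g (Ici 0))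
    (hfpos : ∀ t ∈ Ici (0:ℝ), 0 < f t) (hgpos : ∀ t ∈ Ici (0:ℝ), 0 < g t)
    (hp : 1 ≤ p) (hm : 0 < m)
    (hfin_f : IntervalIntegrable (fun τ => Fker α β η μ k x τ * τ ^ k * (f τ ^ p)) volume 0 x)
    (hfin_g : IntervalIntegrable (fun τ => Fker α β η μ k x τ * τ ^ k * (g τ ^ p)) volume 0 x)
    (hfin_fg : IntervalIntegrable (fun τ => Fker α β η μ k x τ * τ ^ k * ((f τ + g τ) ^ p)) volume 0 x)
    (hbd : ∀ τ ∈ Ioo (0:ℝ) x, m ≤ f τ / g τ ∧ f τ / g τ ≤ M) :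
    ((M + 1) * (m + 1) / M) *
        ((genKInt α β η μ k x (fun τ => f τ ^ p)) ^ (1 / p) * (genKInt α β η μ k x (fun τ => g τ ^ p)) ^ (1 / p)) ≤
      ((genKInt α β η μ k x (fun τ => (f τ + g τ) ^ p)) ^ (1 / p)) ^ 2 := by
  have hf : ∀ τ ∈ Ioo (0:ℝ) x, 0 < f τ := fun τ hτ => hfpos τ hτ.1.le
  have hg : ∀ τ ∈ Ioo (0:ℝ) x, 0 < g τ := fun τ hτ => hgpos τ hτ.1.le
  -- `M` is positive because `(0, x)` is nonempty.
  have hM : 0 < M := by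
    have h := hbd (x / 2) ⟨by linarith, by linarith⟩
    linarith [h.1, h.2]
  obtain ⟨hA0, hA⟩ := genKInt_rpow_le (c := M / (M + 1)) (v := fun τ => f τ + g τ) hk hα hη2 hx hp
    (by positivity) (fun τ hτ => (hf τ hτ).le) (fun τ hτ => (add_pos (hf τ hτ) (hg τ hτ)).le)
    (fun τ hτ => by
      have h := (div_le_iff₀ (hg τ hτ)).1 (hbd τ hτ).2
      rw [div_mul_eq_mul_div, le_div_iff₀ (by linarith)]
      linarith) hfin_f hfin_fg
  obtain ⟨hB0, hB⟩ := genKInt_rpow_le (c := 1 / (m + 1)) (v := fun τ => f τ + g τ) hk hα hη2 hx hp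
    (by positivity) (fun τ hτ => (hg τ hτ).le) (fun τ hτ => (add_pos (hf τ hτ) (hg τ hτ)).le)
    (fun τ hτ => by
      have h := (le_div_iff₀ (hg τ hτ)).1 (hbd τ hτ).1
      rw [div_mul_eq_mul_div, le_div_iff₀ (by linarith)]
      linarith) hfin_g hfin_fg
  have h := mul_le_mul hA hB hB0 (hA0.trans hA)
  refine (mul_le_mul_of_nonneg_left h (by positivity)).trans_eq ?_
  field_simp
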